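/- Let r ≥ 2 be an integer. The topological closure of Λ^{(r)} in the reals equals Π_∞^{(r)}. -/

import Mathlib

/-!
Both inclusions rest on one sampling computation. If the vertices of `Fin k` are mapped independently
to the vertices of an `r`-graph `G` with distribution `x`, then the expected edge density of the
pullback of `G` is the edge polynomial `r! ∑_{f ∈ G} ∏_{v ∈ f} x_v`
(`sum_weight_card_pullGraph`). Hence for every `k` some `r`-graph on `k` vertices homomorphic to `G`
has density at least `λ(G)` (`exists_pullGraph_card_ge`). Conversely, an `H` on `k` vertices that is
homomorphic to `G` satisfies `r! |H| / k ^ r ≤ λ(G)` (`card_le_graphLagrangian_of_hom`).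

*Limits of Lagrangians are Turán densities.* Let `λ(G_t) → x`, and let `𝓕` consist of the `r`-graphs
homomorphic to `G_t` for only finitely many `t`. The `𝓕`-free graphs are exactly those homomorphic to
infinitely many `G_t`, so their density is asymptotically at most `x`. Since there are finitely many
graphs on `n` vertices, one of the pullbacks of density at least `λ(G_t)` recurs for infinitely many
`t`; it is `𝓕`-free and has density at least `x`.

*Turán densities are limits of Lagrangians.* Let `𝓕` have density `x > 0` and let `G_n` be extremal.
Averaging the sampling identity with uniform weights over maps `Fin m → Fin n` shows that some fixed
`H` on `m` vertices, of density at least `x - ε`, is the pullback of `G_n` along a positive proportion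
of the injective maps, for infinitely many `n`. By Erdős's theorem on complete multipartite
configurations (`eventually_exists_box`), `G_n` then contains every blow-up of `H`, so blow-ups of `H`
are `𝓕`-free and `λ(H) ≤ x`; and `λ(H) ≥ r! |H| / m ^ r`, which is close to `x` for large `m`.
-/

open Filter Topology

noncomputable section

/-- The Lagrange polynomial `λ_𝓔` of a family `E` of `r`-multisets on the index type `ι`:
`λ_𝓔(x) = r! · ∑_{E ∈ 𝓔} ∏_i x_i^{E(i)} / E(i)!`. -/
def lagrangePoly {ι : Type} [Fintype ι] [DecidableEq ι]
    (r : ℕ) (E : Finset (Multiset ι)) (x : ι → ℝ) : ℝ :=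
  (Nat.factorial r : ℝ) *
    ∑ e ∈ E, ∏ i, x i ^ (Multiset.count i e) / ((Multiset.count i e).factorial : ℝ)

/-- The Lagrangian `λ(P)` of a pattern `P = (ι, E)`: the maximum of the Lagrange polynomial
over the standard simplex. -/
def patternLagrangian {ι : Type} [Fintype ι] [DecidableEq ι]
    (r : ℕ) (E : Finset (Multiset ι)) : ℝ :=
  sSup (lagrangePoly r E '' stdSimplex ℝ ι)

/-- The family `𝓔[S]` of the induced subpattern `P[S]`, consisting of those multisets of `E`
all of whose elements lie in `S`, relabelled as multisets on the subtype `{i // i ∈ S}`. -/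
def subFamily {ι : Type} [DecidableEq ι] (E : Finset (Multiset ι)) (S : Finset ι) :
    Finset (Multiset {i : ι // i ∈ S}) := by
  classical
  exact (E.filter (fun e => ∀ i ∈ e, i ∈ S)).image
    (fun e => Multiset.filterMap
      (fun i => if h : i ∈ S then some (⟨i, h⟩ : {i : ι // i ∈ S}) else none) e)

/-- A pattern is minimal if removing any index strictly decreases the Lagrangian.
(`P - i` is exactly the induced subpattern on `univ.erase i`.) -/
def IsMinimalPattern {ι : Type} [Fintype ι] [DecidableEq ι] (r : ℕ)
    (E : Finset (Multiset ι)) : Prop :=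
  ∀ i : ι, patternLagrangian r (subFamily E (Finset.univ.erase i)) < patternLagrangian r E

/-- Index set of the union `P₁ ⊕_i P₂`: index `i` of `ι₁` is replaced by a copy of `ι₂`. -/
abbrev unionIndex (ι₁ ι₂ : Type) (i : ι₁) : Type := {j : ι₁ // j ≠ i} ⊕ ι₂

/-- Projection of the union index set back to `ι₁` (collapsing the copy of `ι₂` to `i`). -/
def unionProj {ι₁ ι₂ : Type} (i : ι₁) : unionIndex ι₁ ι₂ i → ι₁ :=
  Sum.elim (fun j => j.1) (fun _ => i)

/-- The family `𝓔̂` of the union `P₁ ⊕_i P₂`: an `r`-multiset on the new index set belongs to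
`𝓔̂` iff its projection to `ι₁` belongs to `E₁` (cases (b),(c)), or it is a copy of a member
of `E₂` lying inside the copy of `ι₂` (case (a)). -/
def unionFamily {ι₁ ι₂ : Type} [Fintype ι₁] [Fintype ι₂] [DecidableEq ι₁] [DecidableEq ι₂]
    (r : ℕ) (E₁ : Finset (Multiset ι₁)) (E₂ : Finset (Multiset ι₂)) (i : ι₁) :
    Finset (Multiset (unionIndex ι₁ ι₂ i)) := by
  classical
  exact Finset.image (fun R : Sym (unionIndex ι₁ ι₂ i) r => (R : Multiset (unionIndex ι₁ ι₂ i)))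
    ((Finset.univ.sym r).filter
      (fun R : Sym (unionIndex ι₁ ι₂ i) r =>
        Multiset.map (unionProj i) (R : Multiset (unionIndex ι₁ ι₂ i)) ∈ E₁ ∨
        ∃ e ∈ E₂, (R : Multiset (unionIndex ι₁ ι₂ i)) = Multiset.map Sum.inr e))

/-- Index set of the union `P₁ ⊕_T P₂`: each index of `T` is replaced by a copy of `ι₂`. -/
abbrev unionIndexT (ι₁ ι₂ : Type) (T : Finset ι₁) : Type :=
  {j : ι₁ // j ∉ T} ⊕ ({j : ι₁ // j ∈ T} × ι₂)

/-- Projection of the union index set back to `ι₁`. -/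
def unionProjT {ι₁ ι₂ : Type} (T : Finset ι₁) : unionIndexT ι₁ ι₂ T → ι₁ :=
  Sum.elim (fun j => j.1) (fun p => p.1.1)

/-- The family `𝓔̂` of the union `P₁ ⊕_T P₂`. -/
def unionFamilyT {ι₁ ι₂ : Type} [Fintype ι₁] [Fintype ι₂] [DecidableEq ι₁] [DecidableEq ι₂]
    (r : ℕ) (E₁ : Finset (Multiset ι₁)) (E₂ : Finset (Multiset ι₂)) (T : Finset ι₁) :
    Finset (Multiset (unionIndexT ι₁ ι₂ T)) := by
  classical
  exact Finset.image (fun R : Sym (unionIndexT ι₁ ι₂ T) r => (R : Multiset (unionIndexT ι₁ ι₂ T)))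
    ((Finset.univ.sym r).filter
      (fun R : Sym (unionIndexT ι₁ ι₂ T) r =>
        Multiset.map (unionProjT T) (R : Multiset (unionIndexT ι₁ ι₂ T)) ∈ E₁ ∨
        ∃ i : {j : ι₁ // j ∈ T}, ∃ e ∈ E₂,
          (R : Multiset (unionIndexT ι₁ ι₂ T)) = Multiset.map (fun k => Sum.inr (i, k)) e))

/-- The pattern `P_G` associated with an `r`-graph `G`: its multisets are the edges of `G`. -/
def graphPattern {V : Type} [DecidableEq V] (G : Finset (Finset V)) : Finset (Multiset V) :=
  G.image Finset.val

/-- The Lagrangian `λ(G)` of an `r`-graph `G`. -/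
def graphLagrangian {V : Type} [Fintype V] [DecidableEq V] (r : ℕ) (G : Finset (Finset V)) : ℝ :=
  patternLagrangian r (graphPattern G)

/-- `α` is a jump for `r`. -/
def IsJump (r : ℕ) (α : ℝ) : Prop :=
  ∃ c : ℝ, 0 < c ∧ ∀ ε : ℝ, 0 < ε → ∀ m : ℕ, r ≤ m → ∃ n₀ : ℕ, ∀ n : ℕ, n₀ ≤ n →
    ∀ G : Finset (Finset (Fin n)), (∀ e ∈ G, e.card = r) →
      α + ε ≤ (G.card : ℝ) / (n.choose r : ℝ) →
      ∃ W : Finset (Fin n), W.card = m ∧ ∃ H ⊆ G, (∀ e ∈ H, e ⊆ W) ∧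
        α + c ≤ (H.card : ℝ) / (m.choose r : ℝ)

/-- `G` contains a copy of `F` as a subgraph. -/
def GraphContains {n k : ℕ} (G : Finset (Finset (Fin n))) (F : Finset (Finset (Fin k))) : Prop :=
  ∃ φ : Fin k → Fin n, Function.Injective φ ∧ ∀ e ∈ F, e.image φ ∈ G

/-- The Turán number `ex(n, 𝓕)` for a family `𝓕` of graphs, among `r`-uniform hosts. -/
def exNum (r n : ℕ) (𝓕 : Set (Σ k : ℕ, Finset (Finset (Fin k)))) : ℕ :=
  sSup {c : ℕ | ∃ G : Finset (Finset (Fin n)), (∀ e ∈ G, e.card = r) ∧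
    (∀ F ∈ 𝓕, ¬ GraphContains G F.2) ∧ G.card = c}

/-- `Π_∞^{(r)}`: the set of Turán densities of (possibly infinite) families of `r`-graphs. -/
def turanDensitySet (r : ℕ) : Set ℝ :=
  {x | ∃ 𝓕 : Set (Σ k : ℕ, Finset (Finset (Fin k))),
    (∀ F ∈ 𝓕, ∀ e ∈ F.2, e.card = r) ∧
    Tendsto (fun n => (exNum r n 𝓕 : ℝ) / (n.choose r : ℝ)) atTop (nhds x)}

/-- `Λ^{(r)}`: the set of Lagrangians of `r`-graphs. -/
def lambdaSet (r : ℕ) : Set ℝ :=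
  {x | ∃ (n : ℕ) (G : Finset (Finset (Fin n))), (∀ e ∈ G, e.card = r) ∧ graphLagrangian r G = x}

/-- The tail `(P_t)_{t ≥ t₀}` of a sequence of patterns is a `(k, l)`-sequence. -/
def IsKLambdaSeqFrom (r k t₀ : ℕ) (l : ℝ) (ι : ℕ → Type)
    [∀ t, Fintype (ι t)] [∀ t, DecidableEq (ι t)]
    (𝓔 : ∀ t, Finset (Multiset (ι t))) : Prop :=
  ∃ ε : ℕ → ℝ,
    (∀ t, t₀ ≤ t → 0 < ε t) ∧
    Tendsto (fun t => patternLagrangian r (𝓔 t)) atTop (nhds l) ∧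
    (∀ t, t₀ ≤ t → l + ε t ≤ patternLagrangian r (𝓔 t)) ∧
    (∀ t, t₀ ≤ t → ∀ S : Finset (ι t), S.card = k →
      patternLagrangian r (subFamily (𝓔 t) S) ≤ l)

/-- A `(k, l)`-sequence of patterns. -/
def IsKLambdaSeq (r k : ℕ) (l : ℝ) (ι : ℕ → Type)
    [∀ t, Fintype (ι t)] [∀ t, DecidableEq (ι t)]
    (𝓔 : ∀ t, Finset (Multiset (ι t))) : Prop :=
  IsKLambdaSeqFrom r k 0 l ι 𝓔

/-- A non-jump sequence of patterns on `l`: for every `k > 0` some tail is a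
`(k, l)`-sequence. -/
def IsNonJumpSeq (r : ℕ) (l : ℝ) (ι : ℕ → Type)
    [∀ t, Fintype (ι t)] [∀ t, DecidableEq (ι t)]
    (𝓔 : ∀ t, Finset (Multiset (ι t))) : Prop :=
  ∀ k : ℕ, 0 < k → ∃ t₀ : ℕ, IsKLambdaSeqFrom r k t₀ l ι 𝓔

/-- The family of all `r`-multisets on `Fin m` except the `m` constant ones. -/
def allButConstant (m r : ℕ) : Finset (Multiset (Fin m)) := by
  classical
  exact ((Finset.univ.sym r).image (fun s : Sym (Fin m) r => (s : Multiset (Fin m)))).filter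
    (fun e => ¬ ∃ i : Fin m, e = Multiset.replicate r i)

end

/-! ### Lagrangians as maxima of edge polynomials -/

/-- The edge polynomial `r! ∑_{f ∈ G} ∏_{v ∈ f} x_v` of a hypergraph on `Fin m`, whose maximum
over the simplex is the Lagrangian. -/
noncomputable def edgePoly (r : ℕ) {m : ℕ} (G : Finset (Finset (Fin m))) (x : Fin m → ℝ) : ℝ :=
  (r.factorial : ℝ) * ∑ f ∈ G, ∏ v ∈ f, x v

/-- The pullback of `G` along a vertex map `φ`: the largest `r`-graph on `Fin k` for which `φ` is a
homomorphism to `G`. -/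
def pullGraph (r : ℕ) {k m : ℕ} (φ : Fin k → Fin m) (G : Finset (Finset (Fin m))) :
    Finset (Finset (Fin k)) :=
  (Finset.univ.powersetCard r).filter (fun e => e.image φ ∈ G)

lemma mem_pullGraph {r k m : ℕ} {φ : Fin k → Fin m} {G : Finset (Finset (Fin m))}
    {e : Finset (Fin k)} : e ∈ pullGraph r φ G ↔ e.card = r ∧ e.image φ ∈ G := by
  simp [pullGraph, Finset.mem_powersetCard]

lemma card_pullGraph_le {r k m : ℕ} (φ : Fin k → Fin m) (G : Finset (Finset (Fin m))) :
    (pullGraph r φ G).card ≤ k.choose r := by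
  refine (Finset.card_filter_le _ _).trans ?_
  simp

lemma lagrangePoly_graphPattern (r : ℕ) {m : ℕ} (G : Finset (Finset (Fin m))) (x : Fin m → ℝ) :
    lagrangePoly r (graphPattern G) x = edgePoly r G x := by
  unfold lagrangePoly graphPattern edgePoly
  rw [Finset.sum_image (fun a _ b _ h => Finset.val_injective h)]
  congr 1
  refine Finset.sum_congr rfl fun f _ => ?_
  have : ∀ i : Fin m, x i ^ (Multiset.count i f.val) / ((Multiset.count i f.val).factorial : ℝ)
      = if i ∈ f then x i else 1 := by
    intro i
    rw [Multiset.count_eq_of_nodup f.nodup]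
    by_cases h : i ∈ f <;> simp [h]
  simp_rw [this]
  simp [Finset.prod_ite_mem]

lemma continuous_edgePoly (r : ℕ) {m : ℕ} (G : Finset (Finset (Fin m))) :
    Continuous (edgePoly r G) := by
  unfold edgePoly
  fun_prop

lemma graphLagrangian_eq (r : ℕ) {m : ℕ} (G : Finset (Finset (Fin m))) :
    graphLagrangian r G = sSup (edgePoly r G '' stdSimplex ℝ (Fin m)) := by
  unfold graphLagrangian patternLagrangian
  congr 2
  funext x
  exact lagrangePoly_graphPattern r G x

lemma isCompact_edgePoly_image (r : ℕ) {m : ℕ} (G : Finset (Finset (Fin m))) :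
    IsCompact (edgePoly r G '' stdSimplex ℝ (Fin m)) :=
  (isCompact_stdSimplex ℝ (Fin m)).image (continuous_edgePoly r G)

lemma edgePoly_le_graphLagrangian (r : ℕ) {m : ℕ} (G : Finset (Finset (Fin m))) {x : Fin m → ℝ}
    (hx : x ∈ stdSimplex ℝ (Fin m)) : edgePoly r G x ≤ graphLagrangian r G := by
  rw [graphLagrangian_eq]
  exact le_csSup (isCompact_edgePoly_image r G).bddAbove ⟨x, hx, rfl⟩

lemma uniform_mem_stdSimplex {m : ℕ} (hm : 0 < m) :
    (fun _ => (m : ℝ)⁻¹) ∈ stdSimplex ℝ (Fin m) := by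
  refine ⟨fun _ => by positivity, ?_⟩
  have : (m : ℝ) ≠ 0 := by positivity
  simp [this]

lemma exists_edgePoly_eq_graphLagrangian (r : ℕ) {m : ℕ} (hm : 0 < m)
    (G : Finset (Finset (Fin m))) :
    ∃ x ∈ stdSimplex ℝ (Fin m), edgePoly r G x = graphLagrangian r G := by
  rw [graphLagrangian_eq]
  exact (isCompact_edgePoly_image r G).sSup_mem ⟨_, _, uniform_mem_stdSimplex hm, rfl⟩

/-! ### Random pullbacks and homomorphisms -/

/-- Sampling the vertex map with weights `x`, the probability that a fixed `r`-set `e` is mapped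
onto a fixed `r`-set `f` is `r! ∏_{v ∈ f} x_v`: there are `r!` bijections `e ≃ f`, and each one is
realised with probability `∏_{v ∈ f} x_v`. -/
lemma sum_weight_image_eq {r k m : ℕ} {x : Fin m → ℝ} (hx : ∑ v, x v = 1)
    {e : Finset (Fin k)} {f : Finset (Fin m)} (he : e.card = r) (hf : f.card = r) :
    ∑ φ : Fin k → Fin m, (if e.image φ = f then ∏ i, x (φ i) else 0)
      = (r.factorial : ℝ) * ∏ v ∈ f, x v := by
  classical
  have key : ∀ φ : Fin k → Fin m, (if e.image φ = f then ∏ i, x (φ i) else 0)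
      = ∑ σ : e ≃ f, if ∀ i : e, φ i = σ i then ∏ i, x (φ i) else 0 := by
    intro φ
    by_cases h : e.image φ = f
    · have hmem : ∀ i : e, φ i ∈ f := fun i => h ▸ Finset.mem_image_of_mem φ i.2
      have hbij : Function.Bijective (fun i : e => (⟨φ i, hmem i⟩ : f)) := by
        rw [Fintype.bijective_iff_surjective_and_card]
        refine ⟨?_, by simp [he, hf]⟩
        rintro ⟨v, hv⟩
        rw [← h, Finset.mem_image] at hv
        obtain ⟨i, hi, rfl⟩ := hv
        exact ⟨⟨i, hi⟩, rfl⟩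
      rw [if_pos h, Finset.sum_eq_single (Equiv.ofBijective _ hbij)]
      · simp
      · intro σ _ hσ
        rw [if_neg]
        intro hall
        apply hσ
        ext i
        simp [hall i]
      · simp
    · rw [if_neg h, Finset.sum_eq_zero]
      intro σ _
      rw [if_neg]
      intro hall
      apply h
      ext v
      rw [Finset.mem_image]
      constructor
      · rintro ⟨i, hi, rfl⟩
        rw [hall ⟨i, hi⟩]
        exact (σ ⟨i, hi⟩).2
      · intro hv
        refine ⟨σ.symm ⟨v, hv⟩, (σ.symm ⟨v, hv⟩).2, ?_⟩
        rw [hall]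
        simp
  simp_rw [key]
  rw [Finset.sum_comm]
  have hσ : ∀ σ : e ≃ f, ∑ φ : Fin k → Fin m, (if ∀ i : e, φ i = σ i then ∏ i, x (φ i) else 0)
      = ∏ v ∈ f, x v := by
    intro σ
    let t : Fin k → Finset (Fin m) := fun i =>
      if h : i ∈ e then {((σ ⟨i, h⟩ : f) : Fin m)} else Finset.univ
    have hfil : (Finset.univ.filter fun φ : Fin k → Fin m => ∀ i : e, φ i = σ i)
        = Fintype.piFinset t := by
      ext φ
      simp only [Finset.mem_filter, Finset.mem_univ, true_and, Fintype.mem_piFinset, t]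
      constructor
      · intro h i
        by_cases hi : i ∈ e
        · simp [hi, h ⟨i, hi⟩]
        · simp [hi]
      · rintro h ⟨i, hi⟩
        simpa [hi] using h i
    rw [← Finset.sum_filter, hfil, ← Finset.prod_univ_sum t (fun _ v => x v)]
    rw [← Finset.prod_subset (Finset.subset_univ e)]
    · rw [← Finset.prod_coe_sort e, ← Finset.prod_coe_sort f, ← Equiv.prod_comp σ]
      refine Finset.prod_congr rfl fun i _ => ?_
      simp [t]
    · intro i _ hi
      simp [t, hi, hx]
  rw [Finset.sum_congr rfl fun σ _ => hσ σ]
  rw [Finset.sum_const, Finset.card_univ,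
    Fintype.card_equiv (Finset.equivOfCardEq (he.trans hf.symm))]
  simp [he]

/-- The expected number of edges in the pullback of `G` along a random vertex map. -/
lemma sum_weight_card_pullGraph {r k m : ℕ} {x : Fin m → ℝ} (hx : ∑ v, x v = 1)
    {G : Finset (Finset (Fin m))} (hG : ∀ f ∈ G, f.card = r) :
    ∑ φ : Fin k → Fin m, (∏ i, x (φ i)) * ((pullGraph r φ G).card : ℝ)
      = (k.choose r : ℝ) * edgePoly r G x := by
  have h1 : ∀ φ : Fin k → Fin m, (∏ i, x (φ i)) * ((pullGraph r φ G).card : ℝ)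
      = ∑ e ∈ (Finset.univ : Finset (Fin k)).powersetCard r, ∑ f ∈ G,
          if e.image φ = f then ∏ i, x (φ i) else 0 := by
    intro φ
    simp only [Finset.sum_ite_eq]
    rw [← Finset.sum_filter, Finset.sum_const, nsmul_eq_mul, mul_comm]
    rfl
  simp_rw [h1]
  rw [Finset.sum_comm]
  have h2 : ∀ e ∈ (Finset.univ : Finset (Fin k)).powersetCard r,
      ∑ φ : Fin k → Fin m, ∑ f ∈ G, (if e.image φ = f then ∏ i, x (φ i) else 0)
        = edgePoly r G x := by
    intro e he
    rw [Finset.sum_comm, edgePoly, Finset.mul_sum]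
    exact Finset.sum_congr rfl fun f hf =>
      sum_weight_image_eq hx (Finset.mem_powersetCard.mp he).2 (hG f hf)
  rw [Finset.sum_congr rfl h2]
  simp

/-- For every `k` there is an `r`-graph on `k` vertices, homomorphic to `G`, with edge density at
least the Lagrangian of `G`. -/
lemma exists_pullGraph_card_ge {r m : ℕ} (k : ℕ) (hm : 0 < m)
    {G : Finset (Finset (Fin m))} (hG : ∀ f ∈ G, f.card = r) :
    ∃ φ : Fin k → Fin m,
      (k.choose r : ℝ) * graphLagrangian r G ≤ ((pullGraph r φ G).card : ℝ) := by
  obtain ⟨x, hx, hxG⟩ := exists_edgePoly_eq_graphLagrangian r hm G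
  by_contra! hcon
  have hsum := sum_weight_card_pullGraph (k := k) hx.2 hG
  have hw : ∑ φ : Fin k → Fin m, ∏ i, x (φ i) = 1 := by
    have := Finset.prod_univ_sum (fun _ : Fin k => (Finset.univ : Finset (Fin m))) (fun _ v => x v)
    rw [Fintype.piFinset_univ] at this
    rw [← this]
    simp [hx.2]
  have hw0 : ∀ φ : Fin k → Fin m, 0 ≤ ∏ i, x (φ i) := fun φ =>
    Finset.prod_nonneg fun i _ => hx.1 _
  obtain ⟨φ, _, hφ⟩ : ∃ φ ∈ (Finset.univ : Finset (Fin k → Fin m)), 0 < ∏ i, x (φ i) := by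
    by_contra! h
    have := Finset.sum_nonpos h
    rw [hw] at this
    linarith
  have hlt : ∑ φ : Fin k → Fin m, (∏ i, x (φ i)) * ((pullGraph r φ G).card : ℝ)
      < ∑ φ : Fin k → Fin m, (∏ i, x (φ i)) * ((k.choose r : ℝ) * graphLagrangian r G) :=
    Finset.sum_lt_sum (fun φ _ => mul_le_mul_of_nonneg_left (hcon φ).le (hw0 φ))
      ⟨φ, Finset.mem_univ _, mul_lt_mul_of_pos_left (hcon φ) hφ⟩
  rw [hsum, ← Finset.sum_mul, hw, one_mul, hxG] at hlt
  exact lt_irrefl _ hlt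

/-- If `H` on `k` vertices is homomorphic to `G`, then `r! |H| / k ^ r ≤ λ(G)`: evaluate at the
push-forward of the uniform weights on the vertices of `H`. -/
lemma card_le_graphLagrangian_of_hom {r k m : ℕ} (hk : 0 < k)
    {H : Finset (Finset (Fin k))} (hH : ∀ e ∈ H, e.card = r)
    {G : Finset (Finset (Fin m))} (hG : ∀ f ∈ G, f.card = r)
    (φ : Fin k → Fin m) (hφ : ∀ e ∈ H, e.image φ ∈ G) :
    (r.factorial : ℝ) * (H.card : ℝ) / (k : ℝ) ^ r ≤ graphLagrangian r G := by
  classical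
  let c : Fin m → ℕ := fun v => (Finset.univ.filter fun i => φ i = v).card
  have hk0 : (k : ℝ) ≠ 0 := by positivity
  have hcsum : ∑ v, c v = k := by
    have := Finset.card_eq_sum_card_fiberwise (f := φ) (s := (Finset.univ : Finset (Fin k)))
      (t := Finset.univ) (fun _ _ => Finset.mem_univ _)
    simpa [c] using this.symm
  have hmem : (fun v => (c v : ℝ) / k) ∈ stdSimplex ℝ (Fin m) := by
    refine ⟨fun v => by positivity, ?_⟩
    rw [← Finset.sum_div, ← Nat.cast_sum, hcsum, div_self hk0]
  refine le_trans ?_ (edgePoly_le_graphLagrangian r G hmem)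
  -- An edge over `f` is determined by its vertices in the fibres over the points of `f`.
  have hfib : ∀ f ∈ G, (H.filter fun e => e.image φ = f).card ≤ ∏ v ∈ f, c v := by
    intro f hf
    rw [← Finset.card_pi]
    have hsec : ∀ e : Finset (Fin k), e.image φ = f → ∀ v ∈ f, ∃ i ∈ e, φ i = v := by
      intro e he v hv
      rw [← he] at hv
      simpa using hv
    have : Nonempty (Fin k) := ⟨⟨0, hk⟩⟩
    choose! g hg using hsec
    refine Finset.card_le_card_of_injOn (fun e => fun v _ => g e v) ?_ ?_
    · intro e he
      have he' := (Finset.mem_filter.mp he).2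
      simp only [Finset.mem_coe, Finset.mem_pi, Finset.mem_filter, Finset.mem_univ, true_and]
      exact fun v hv => (hg e he' v hv).2
    · have himg : ∀ e ∈ H.filter (fun e => e.image φ = f), e = f.image (g e) := by
        intro e he
        obtain ⟨heH, he'⟩ := Finset.mem_filter.mp he
        symm
        refine Finset.eq_of_subset_of_card_le ?_ ?_
        · intro i hi
          obtain ⟨v, hv, rfl⟩ := Finset.mem_image.mp hi
          exact (hg e he' v hv).1
        · rw [hH e heH, Finset.card_image_of_injOn, hG f hf]
          intro v hv w hw hvw
          rw [← (hg e he' v hv).2, ← (hg e he' w hw).2, hvw]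
      intro e he e' he' hee
      rw [himg e he, himg e' he']
      refine Finset.image_congr fun v hv => ?_
      exact congrFun (congrFun hee v) hv
  have hcard : (H.card : ℝ) ≤ ∑ f ∈ G, ∏ v ∈ f, (c v : ℝ) := by
    rw [Finset.card_eq_sum_card_fiberwise (f := Finset.image φ) (t := G) hφ]
    push_cast
    refine Finset.sum_le_sum fun f hf => ?_
    exact_mod_cast hfib f hf
  unfold edgePoly
  have hdiv : ∑ f ∈ G, ∏ v ∈ f, (c v : ℝ) / k = (∑ f ∈ G, ∏ v ∈ f, (c v : ℝ)) / (k : ℝ) ^ r := by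
    rw [Finset.sum_div]
    refine Finset.sum_congr rfl fun f hf => ?_
    rw [Finset.prod_div_distrib, Finset.prod_const, hG f hf]
  rw [hdiv, mul_div_assoc]
  gcongr

/-! ### Asymptotic counts and Erdős's box theorem -/

lemma tendsto_pow_div_choose (r : ℕ) :
    Tendsto (fun n : ℕ => (n : ℝ) ^ r / ((r.factorial : ℝ) * (n.choose r : ℝ))) atTop (nhds 1) := by
  have hz : ∀ᶠ n : ℕ in atTop, ((n : ℝ) ^ r / (r.factorial : ℝ)) ≠ 0 := by
    filter_upwards [eventually_gt_atTop 0] with n hn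
    positivity
  have h := (Asymptotics.isEquivalent_iff_tendsto_one hz).mp (isEquivalent_choose r)
  have h' := h.inv₀ one_ne_zero
  rw [inv_one] at h'
  refine h'.congr fun n => ?_
  simp only [Pi.div_apply, inv_div]
  rw [div_div]

lemma eventually_card_not_injective_le (k : ℕ) {ε : ℝ} (hε : 0 < ε) :
    ∀ᶠ n : ℕ in atTop,
      (((Finset.univ : Finset (Fin k → Fin n)).filter
        (fun X => ¬ Function.Injective X)).card : ℝ) ≤ ε * (n : ℝ) ^ k := by
  have hz : ∀ᶠ n : ℕ in atTop, ((n : ℝ) ^ k) ≠ 0 := by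
    filter_upwards [eventually_gt_atTop 0] with n hn
    positivity
  have h := (Asymptotics.isEquivalent_iff_tendsto_one hz).mp (isEquivalent_descFactorial k)
  filter_upwards [h.eventually_const_lt (show 1 - ε < 1 by linarith), eventually_gt_atTop 0]
    with n hn hn0
  have hpos : (0 : ℝ) < (n : ℝ) ^ k := by positivity
  simp only [Pi.div_apply] at hn
  rw [lt_div_iff₀ hpos] at hn
  have hinj : ((Finset.univ : Finset (Fin k → Fin n)).filter
      (fun X => Function.Injective X)).card = n.descFactorial k := by
    have := Fintype.card_embedding_eq (α := Fin k) (β := Fin n)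
    rw [← Fintype.card_congr (Equiv.subtypeInjectiveEquivEmbedding (Fin k) (Fin n)),
      Fintype.card_subtype] at this
    simpa using this
  have hadd := Finset.card_filter_add_card_filter_not
    (s := (Finset.univ : Finset (Fin k → Fin n))) (fun X => Function.Injective X)
  rw [hinj] at hadd
  have hadd' : (n.descFactorial k : ℝ) + (((Finset.univ : Finset (Fin k → Fin n)).filter
        (fun X => ¬ Function.Injective X)).card : ℝ) = (n : ℝ) ^ k := by
    have : (Finset.univ : Finset (Fin k → Fin n)).card = n ^ k := by simp
    rw [this] at hadd
    exact_mod_cast hadd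
  linarith

/-- Erdős's theorem on complete multipartite configurations: a set `A` of `m`-tuples of positive
density contains a box `∏ i, ψ i (Fin (s + 1))` with injective sides. The proof is by induction on
`m`; the power mean inequality gives an injective `(s + 1)`-tuple of first coordinates with
positively many common completions. -/
lemma eventually_exists_box (s m : ℕ) : ∀ δ : ℝ, 0 < δ → ∀ᶠ n : ℕ in atTop,
    ∀ A : Finset (Fin m → Fin n), δ * (n : ℝ) ^ m ≤ (A.card : ℝ) →
      ∃ ψ : Fin m → Fin (s + 1) → Fin n, (∀ i, Function.Injective (ψ i)) ∧
        ∀ g : Fin m → Fin (s + 1), (fun i => ψ i (g i)) ∈ A := by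
  induction m with
  | zero =>
    intro δ hδ
    refine Eventually.of_forall fun n A hA => ⟨fun i => i.elim0, fun i => i.elim0, fun g => ?_⟩
    have hpos : 0 < A.card := by
      have : (0 : ℝ) < A.card := lt_of_lt_of_le (by simpa using hδ) hA
      exact_mod_cast this
    obtain ⟨a, ha⟩ := Finset.card_pos.mp hpos
    rwa [Subsingleton.elim (fun i => _) a]
  | succ m ih =>
    intro δ hδ
    set η : ℝ := δ ^ (s + 1) / 4 with hη
    have hη0 : 0 < η := by positivity
    filter_upwards [ih η hη0, eventually_card_not_injective_le (s + 1) hη0,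
      eventually_gt_atTop 0] with n hbox hinj hn A hA
    classical
    have hn0 : (0 : ℝ) < n := by exact_mod_cast hn
    let ind : Fin n → (Fin m → Fin n) → ℝ := fun v y =>
      if (Fin.cons v y : Fin (m + 1) → Fin n) ∈ A then 1 else 0
    have ind0 : ∀ v y, 0 ≤ ind v y := fun v y => by simp only [ind]; split_ifs <;> norm_num
    have hcardA : (A.card : ℝ) = ∑ y, ∑ v, ind v y := by
      have h1 : (A.card : ℝ) = ∑ z : Fin (m + 1) → Fin n, if z ∈ A then (1 : ℝ) else 0 := by
        simp
      rw [h1, ← (Fin.consEquiv (fun _ : Fin (m + 1) => Fin n)).sum_comp, Fintype.sum_prod_type,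
        Finset.sum_comm]
      rfl
    -- `B X` is the set of common completions of the first coordinates `X`.
    let B : (Fin (s + 1) → Fin n) → Finset (Fin m → Fin n) := fun X =>
      Finset.univ.filter fun y => ∀ j, (Fin.cons (X j) y : Fin (m + 1) → Fin n) ∈ A
    have hB : ∀ X, ((B X).card : ℝ) = ∑ y, ∏ j, ind (X j) y := by
      intro X
      simp only [B, ind, Finset.card_filter]
      push_cast
      refine Finset.sum_congr rfl fun y _ => ?_
      rw [Finset.prod_ite_zero]
      simp
    have hBle : ∀ X, ((B X).card : ℝ) ≤ (n : ℝ) ^ m := by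
      intro X
      have : (B X).card ≤ n ^ m := by
        simpa using Finset.card_le_univ (B X)
      exact_mod_cast this
    have hsum : ∑ X, ((B X).card : ℝ) = ∑ y, (∑ v, ind v y) ^ (s + 1) := by
      simp_rw [hB]
      rw [Finset.sum_comm]
      exact Finset.sum_congr rfl fun y _ => (Fintype.sum_pow (fun v => ind v y) (s + 1)).symm
    have hlow : δ ^ (s + 1) * ((n : ℝ) ^ (s + 1) * (n : ℝ) ^ m) ≤ ∑ X, ((B X).card : ℝ) := by
      rw [hsum]
      have hmean := pow_sum_div_card_le_sum_pow (s := (Finset.univ : Finset (Fin m → Fin n)))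
        (f := fun y => ∑ v, ind v y) (fun y _ => Finset.sum_nonneg fun v _ => ind0 v y) s
      have hcard : ((Finset.univ : Finset (Fin m → Fin n)).card : ℝ) = (n : ℝ) ^ m := by simp
      rw [hcard] at hmean
      refine le_trans ?_ hmean
      rw [← hcardA, le_div_iff₀ (by positivity)]
      calc δ ^ (s + 1) * ((n : ℝ) ^ (s + 1) * (n : ℝ) ^ m) * ((n : ℝ) ^ m) ^ s
          = (δ * (n : ℝ) ^ (m + 1)) ^ (s + 1) := by ring
        _ ≤ (A.card : ℝ) ^ (s + 1) := by gcongr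
    obtain ⟨X, hX, hXB⟩ : ∃ X : Fin (s + 1) → Fin n, Function.Injective X ∧
        η * (n : ℝ) ^ m ≤ ((B X).card : ℝ) := by
      by_contra! hcon
      have hup : ∑ X, ((B X).card : ℝ)
          ≤ (n : ℝ) ^ (s + 1) * (η * (n : ℝ) ^ m) + η * (n : ℝ) ^ (s + 1) * (n : ℝ) ^ m := by
        rw [← Finset.sum_filter_add_sum_filter_not Finset.univ
          (fun X : Fin (s + 1) → Fin n => Function.Injective X)]
        refine add_le_add ?_ ?_
        · refine (Finset.sum_le_card_nsmul _ _ (η * (n : ℝ) ^ m) ?_).trans ?_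
          · intro X hX
            exact (hcon X (Finset.mem_filter.mp hX).2).le
          · rw [nsmul_eq_mul]
            gcongr
            have h := Finset.card_le_univ ((Finset.univ : Finset (Fin (s + 1) → Fin n)).filter
              (fun X => Function.Injective X))
            rw [Fintype.card_fun, Fintype.card_fin, Fintype.card_fin] at h
            exact_mod_cast h
        · refine (Finset.sum_le_card_nsmul _ _ ((n : ℝ) ^ m) fun X _ => hBle X).trans ?_
          rw [nsmul_eq_mul]
          gcongr
      have hpos : 0 < δ ^ (s + 1) * ((n : ℝ) ^ (s + 1) * (n : ℝ) ^ m) := by positivity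
      rw [hη] at hup
      nlinarith
    obtain ⟨ψ, hψ, hψB⟩ := hbox (B X) hXB
    refine ⟨Fin.cons X ψ, ?_, ?_⟩
    · intro i
      refine Fin.cases ?_ (fun j => ?_) i
      · simpa using hX
      · simpa using hψ j
    · intro g
      have h := (Finset.mem_filter.mp (hψB (fun i => g i.succ))).2 (g 0)
      convert! h using 1
      funext i
      refine Fin.cases ?_ (fun j => ?_) i <;> simp

/-! ### Turán numbers -/

/-- `G` contains no member of the family `𝓕`. -/
def IsFree (𝓕 : Set (Σ k : ℕ, Finset (Finset (Fin k)))) {n : ℕ} (G : Finset (Finset (Fin n))) :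
    Prop :=
  ∀ F ∈ 𝓕, ¬ GraphContains G F.2

lemma bddAbove_exNum (r n : ℕ) (𝓕 : Set (Σ k : ℕ, Finset (Finset (Fin k)))) :
    BddAbove {c : ℕ | ∃ G : Finset (Finset (Fin n)), (∀ e ∈ G, e.card = r) ∧
      (∀ F ∈ 𝓕, ¬ GraphContains G F.2) ∧ G.card = c} := by
  refine ⟨Fintype.card (Finset (Fin n)), ?_⟩
  rintro c ⟨G, -, -, rfl⟩
  exact Finset.card_le_univ G

lemma card_le_exNum {r n : ℕ} {𝓕 : Set (Σ k : ℕ, Finset (Finset (Fin k)))}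
    {G : Finset (Finset (Fin n))} (hG : ∀ e ∈ G, e.card = r) (hF : IsFree 𝓕 G) :
    G.card ≤ exNum r n 𝓕 :=
  le_csSup (bddAbove_exNum r n 𝓕) ⟨G, hG, hF, rfl⟩

/-- A positive Turán number is attained. Positivity excludes the junk value `sSup ∅ = 0`, which
occurs when `𝓕` contains an edgeless graph on at most `n` vertices. -/
lemma exists_card_eq_exNum {r n : ℕ} {𝓕 : Set (Σ k : ℕ, Finset (Finset (Fin k)))}
    (h : 0 < exNum r n 𝓕) :
    ∃ G : Finset (Finset (Fin n)), (∀ e ∈ G, e.card = r) ∧ IsFree 𝓕 G ∧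
      G.card = exNum r n 𝓕 := by
  refine Nat.sSup_mem ?_ (bddAbove_exNum r n 𝓕)
  by_contra hne
  rw [Set.not_nonempty_iff_eq_empty] at hne
  rw [exNum, hne] at h
  simp at h

lemma GraphContains.trans {a b c : ℕ} {G : Finset (Finset (Fin a))} {H : Finset (Finset (Fin b))}
    {F : Finset (Finset (Fin c))} (h₁ : GraphContains G H) (h₂ : GraphContains H F) :
    GraphContains G F := by
  obtain ⟨φ, hφ, hφe⟩ := h₁
  obtain ⟨ψ, hψ, hψe⟩ := h₂
  refine ⟨φ ∘ ψ, hφ.comp hψ, fun e he => ?_⟩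
  rw [← Finset.image_image]
  exact hφe _ (hψe e he)

lemma IsFree.of_contains {𝓕 : Set (Σ k : ℕ, Finset (Finset (Fin k)))} {a b : ℕ}
    {G : Finset (Finset (Fin a))} {H : Finset (Finset (Fin b))} (hG : IsFree 𝓕 G)
    (h : GraphContains G H) : IsFree 𝓕 H :=
  fun F hF hc => hG F hF (h.trans hc)

/-! ### Limits of Lagrangians are Turán densities -/

lemma graphLagrangian_empty (r : ℕ) :
    graphLagrangian r (∅ : Finset (Finset (Fin 1))) = 0 := by
  obtain ⟨x, -, hx⟩ := exists_edgePoly_eq_graphLagrangian r one_pos (∅ : Finset (Finset (Fin 1)))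
  rw [← hx]
  simp [edgePoly]

lemma zero_mem_lambdaSet (r : ℕ) : (0 : ℝ) ∈ lambdaSet r :=
  ⟨1, ∅, by simp, graphLagrangian_empty r⟩

/-- The vertex set may be taken nonempty: on `Fin 0` the simplex is empty and the Lagrangian takes
the junk value `0`, which is also the Lagrangian of the edgeless graph on `Fin 1`. -/
lemma exists_pos_of_mem_lambdaSet {r : ℕ} {y : ℝ} (hy : y ∈ lambdaSet r) :
    ∃ (m : ℕ) (G : Finset (Finset (Fin m))), 0 < m ∧ (∀ e ∈ G, e.card = r) ∧
      graphLagrangian r G = y := by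
  obtain ⟨m, G, hG, hy⟩ := hy
  rcases Nat.eq_zero_or_pos m with rfl | hm
  · have h0 : y = 0 := by
      rw [← hy, graphLagrangian_eq]
      have : stdSimplex ℝ (Fin 0) = ∅ := by
        ext x
        simp [stdSimplex]
      simp [this]
    exact ⟨1, ∅, one_pos, by simp, h0 ▸ graphLagrangian_empty r⟩
  · exact ⟨m, G, hm, hG, hy⟩

/-- Given `λ(G_t) → x`, the family of all `r`-graphs that are homomorphic to `G_t` for only finitely
many `t` has Turán density `x`. -/
lemma closure_lambdaSet_subset (r : ℕ) : closure (lambdaSet r) ⊆ turanDensitySet r := by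
  intro x hx
  obtain ⟨l, hl, hlim⟩ := mem_closure_iff_seq_limit.mp hx
  choose m G hm hG hGl using fun t => exists_pos_of_mem_lambdaSet (hl t)
  let IsHom : ∀ {k : ℕ}, Finset (Finset (Fin k)) → ℕ → Prop := fun {k} H t =>
    ∃ φ : Fin k → Fin (m t), ∀ e ∈ H, e.image φ ∈ G t
  let 𝓕 : Set (Σ k : ℕ, Finset (Finset (Fin k))) :=
    {F | (∀ e ∈ F.2, e.card = r) ∧ ¬ ∃ᶠ t in atTop, IsHom F.2 t}
  refine ⟨𝓕, fun F hF => hF.1, ?_⟩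
  have hlower : ∀ n : ℕ, (n.choose r : ℝ) * x ≤ exNum r n 𝓕 := by
    intro n
    choose φ hφ using fun t => exists_pullGraph_card_ge n (hm t) (hG t)
    -- Only finitely many graphs on `Fin n` exist, so one pullback recurs infinitely often.
    obtain ⟨H, hH⟩ : ∃ H, ∃ᶠ t in atTop, pullGraph r (φ t) (G t) = H := by
      rw [← frequently_exists]
      exact Frequently.of_forall fun t => ⟨_, rfl⟩
    have hHr : ∀ e ∈ H, e.card = r := by
      obtain ⟨t, ht⟩ := hH.exists
      intro e he
      rw [← ht] at he
      exact (mem_pullGraph.mp he).1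
    have hHom : ∃ᶠ t in atTop, IsHom H t := by
      refine hH.mono fun t ht => ⟨φ t, fun e he => ?_⟩
      rw [← ht] at he
      exact (mem_pullGraph.mp he).2
    have hfree : IsFree 𝓕 H := by
      rintro F hF ⟨ψ, -, hψ⟩
      refine hF.2 (hHom.mono ?_)
      rintro t ⟨χ, hχ⟩
      refine ⟨χ ∘ ψ, fun e he => ?_⟩
      rw [← Finset.image_image]
      exact hχ _ (hψ e he)
    have hx' : (n.choose r : ℝ) * x ≤ H.card := by
      refine le_of_tendsto_of_frequently (hlim.const_mul _) (hH.mono fun t ht => ?_)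
      have := hφ t
      rwa [ht, hGl] at this
    exact hx'.trans (by exact_mod_cast card_le_exNum hHr hfree)
  have hx0 : 0 ≤ x := by
    refine ge_of_tendsto' hlim fun t => ?_
    have := card_le_graphLagrangian_of_hom (H := ∅) (hm t) (by simp) (hG t) id (by simp)
    rw [hGl] at this
    simpa using this
  have hupper : ∀ n : ℕ, 0 < n → (r.factorial : ℝ) * exNum r n 𝓕 ≤ x * (n : ℝ) ^ r := by
    intro n hn
    rcases Nat.eq_zero_or_pos (exNum r n 𝓕) with h0 | hpos
    · rw [h0]
      have : (0 : ℝ) ≤ x * (n : ℝ) ^ r := by positivity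
      simpa using this
    obtain ⟨H, hHr, hfree, hcard⟩ := exists_card_eq_exNum hpos
    have hHom : ∃ᶠ t in atTop, IsHom H t := by
      by_contra hcon
      exact hfree ⟨n, H⟩ ⟨hHr, hcon⟩ ⟨id, Function.injective_id, fun e he => by simpa using he⟩
    rw [← hcard, ← div_le_iff₀ (by positivity)]
    refine ge_of_tendsto_of_frequently hlim (hHom.mono ?_)
    rintro t ⟨φ, hφ⟩
    rw [← hGl]
    exact card_le_graphLagrangian_of_hom hn hHr (hG t) φ hφ
  have hlim' := (tendsto_pow_div_choose r).const_mul x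
  rw [mul_one] at hlim'
  refine tendsto_of_tendsto_of_tendsto_of_le_of_le' tendsto_const_nhds hlim' ?_ ?_
  · filter_upwards [eventually_ge_atTop r] with n hn
    have hc : (0 : ℝ) < n.choose r := by exact_mod_cast Nat.choose_pos hn
    rw [le_div_iff₀ hc, mul_comm]
    exact hlower n
  · filter_upwards [eventually_ge_atTop r, eventually_gt_atTop 0] with n hn hn0
    have hc : (0 : ℝ) < n.choose r := by exact_mod_cast Nat.choose_pos hn
    rw [← mul_div_assoc, div_le_div_iff₀ hc (by positivity)]
    nlinarith [hupper n hn0]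

/-! ### Turán densities are limits of Lagrangians -/

/-- If positively many injective vertex maps pull `G` back to `H`, for infinitely many `𝓕`-free `G`,
then all blow-ups of `H` are `𝓕`-free, so `λ(H)` is at most the density of `𝓕`. -/
lemma graphLagrangian_le_of_frequently {r m : ℕ} (hm : 0 < m)
    {𝓕 : Set (Σ k : ℕ, Finset (Finset (Fin k)))} {x δ : ℝ} (hδ : 0 < δ)
    (hx : Tendsto (fun n => (exNum r n 𝓕 : ℝ) / (n.choose r : ℝ)) atTop (nhds x))
    {H : Finset (Finset (Fin m))} (hH : ∀ e ∈ H, e.card = r)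
    (hfreq : ∃ᶠ n : ℕ in atTop, ∃ G : Finset (Finset (Fin n)), IsFree 𝓕 G ∧
      δ * (n : ℝ) ^ m ≤ (((Finset.univ : Finset (Fin m → Fin n)).filter
        (fun φ => Function.Injective φ ∧ pullGraph r φ G = H)).card : ℝ)) :
    graphLagrangian r H ≤ x := by
  refine ge_of_tendsto hx ?_
  filter_upwards [eventually_ge_atTop r] with N hN
  have hc : (0 : ℝ) < N.choose r := by exact_mod_cast Nat.choose_pos hN
  rw [le_div_iff₀ hc, mul_comm]
  obtain ⟨φ, hφ⟩ := exists_pullGraph_card_ge N hm hH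
  refine hφ.trans ?_
  have hLr : ∀ e ∈ pullGraph r φ H, e.card = r := fun e he => (mem_pullGraph.mp he).1
  suffices hfree : IsFree 𝓕 (pullGraph r φ H) by exact_mod_cast card_le_exNum hLr hfree
  obtain ⟨n, ⟨G, hGfree, hGcard⟩, hbox⟩ :=
    (hfreq.and_eventually (eventually_exists_box N m δ hδ)).exists
  obtain ⟨ψ, hψ, hψA⟩ := hbox _ hGcard
  refine hGfree.of_contains ⟨fun i => ψ (φ i) i.castSucc, ?_, ?_⟩
  · intro i j hij
    by_cases hφij : φ i = φ j
    · simp only [hφij] at hij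
      exact Fin.castSucc_injective _ (hψ _ hij)
    · -- The box lies in a set of injective maps, so its sides are pairwise disjoint.
      have hinj := (Finset.mem_filter.mp
        (hψA (fun v => if v = φ i then i.castSucc else j.castSucc))).2.1
      refine absurd (hinj (a₁ := φ i) (a₂ := φ j) ?_) hφij
      simpa [Ne.symm hφij] using hij
  · intro e he
    obtain ⟨her, heH⟩ := mem_pullGraph.mp he
    have hinjOn : Set.InjOn φ e := by
      rw [← Finset.card_image_iff, hH _ heH, her]
    classical
    let g : Fin m → Fin (N + 1) := fun v =>
      if h : ∃ i ∈ e, φ i = v then h.choose.castSucc else 0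
    have hg : ∀ i ∈ e, g (φ i) = i.castSucc := by
      intro i hi
      have h : ∃ i' ∈ e, φ i' = φ i := ⟨i, hi, rfl⟩
      simp only [g, dif_pos h]
      exact congrArg _ (hinjOn h.choose_spec.1 hi h.choose_spec.2)
    have hpull := (Finset.mem_filter.mp (hψA g)).2.2
    rw [← hpull] at heH
    have := (mem_pullGraph.mp heH).2
    rw [Finset.image_image] at this
    convert! this using 1
    refine Finset.image_congr fun i hi => ?_
    simp only [Function.comp_apply, hg i hi]

/-- Averaging over all vertex maps: a large dense graph `G` has a dense `r`-graph `H` on `m` vertices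
occurring as pullback along positively many injective maps. -/
lemma eventually_exists_dense_pull {r m : ℕ} (hmr : r ≤ m) {a ε : ℝ} (ha : 0 ≤ a) (hε : 0 < ε) :
    ∃ δ : ℝ, 0 < δ ∧ ∀ᶠ n : ℕ in atTop, ∀ G : Finset (Finset (Fin n)), (∀ e ∈ G, e.card = r) →
      (a + ε) * (n : ℝ) ^ r ≤ (r.factorial : ℝ) * G.card →
      ∃ H : Finset (Finset (Fin m)), (∀ e ∈ H, e.card = r) ∧
        a * (m.choose r : ℝ) ≤ H.card ∧
        δ * (n : ℝ) ^ m ≤ (((Finset.univ : Finset (Fin m → Fin n)).filter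
          (fun φ => Function.Injective φ ∧ pullGraph r φ G = H)).card : ℝ) := by
  set K : ℝ := (Fintype.card (Finset (Finset (Fin m))) : ℝ) with hK
  have hK0 : 0 < K := by
    rw [hK]
    exact_mod_cast Fintype.card_pos
  refine ⟨ε / 2 / K, by positivity, ?_⟩
  filter_upwards [eventually_card_not_injective_le m (half_pos hε), eventually_gt_atTop 0]
    with n hinj hn G hG hdens
  classical
  have hc : (0 : ℝ) < m.choose r := by exact_mod_cast Nat.choose_pos hmr
  have hn0 : (0 : ℝ) < n := by exact_mod_cast hn
  have havg : (n : ℝ) ^ m * ((m.choose r : ℝ) * (a + ε))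
      ≤ ∑ φ : Fin m → Fin n, ((pullGraph r φ G).card : ℝ) := by
    have h := sum_weight_card_pullGraph (k := m) (uniform_mem_stdSimplex hn).2 hG
    simp only [Finset.prod_const, Finset.card_univ, Fintype.card_fin, ← Finset.mul_sum] at h
    have hedge : a + ε ≤ edgePoly r G (fun _ => (n : ℝ)⁻¹) := by
      have : edgePoly r G (fun _ => (n : ℝ)⁻¹) = (r.factorial : ℝ) * G.card / (n : ℝ) ^ r := by
        unfold edgePoly
        rw [Finset.sum_congr rfl fun f hf => by rw [Finset.prod_const, hG f hf]]
        simp [div_eq_mul_inv, mul_assoc]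
      rw [this, le_div_iff₀ (by positivity)]
      exact hdens
    rw [inv_pow, inv_mul_eq_iff_eq_mul₀ (by positivity)] at h
    rw [h]
    gcongr
  let D := (Finset.univ : Finset (Fin m → Fin n)).filter
    (fun φ => a * (m.choose r : ℝ) ≤ (pullGraph r φ G).card)
  have hD : ε * (n : ℝ) ^ m ≤ D.card := by
    have hle : ∑ φ : Fin m → Fin n, ((pullGraph r φ G).card : ℝ)
        ≤ D.card * (m.choose r : ℝ) + (n : ℝ) ^ m * (a * (m.choose r : ℝ)) := by
      rw [← Finset.sum_filter_add_sum_filter_not Finset.univ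
        (fun φ : Fin m → Fin n => a * (m.choose r : ℝ) ≤ (pullGraph r φ G).card)]
      refine add_le_add ?_ ?_
      · refine (Finset.sum_le_card_nsmul _ _ (m.choose r : ℝ) fun φ _ => ?_).trans ?_
        · exact_mod_cast card_pullGraph_le φ G
        · rw [nsmul_eq_mul]
      · refine (Finset.sum_le_card_nsmul _ _ (a * (m.choose r : ℝ)) fun φ hφ => ?_).trans ?_
        · exact (not_le.mp (Finset.mem_filter.mp hφ).2).le
        · rw [nsmul_eq_mul]
          gcongr
          have h := Finset.card_le_univ ((Finset.univ : Finset (Fin m → Fin n)).filter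
            (fun φ => ¬ a * (m.choose r : ℝ) ≤ (pullGraph r φ G).card))
          rw [Fintype.card_fun, Fintype.card_fin, Fintype.card_fin] at h
          exact_mod_cast h
    have h2 := havg.trans hle
    refine le_of_mul_le_mul_right ?_ hc
    linarith
  let D' := D.filter fun φ => Function.Injective φ
  have hD' : ε / 2 * (n : ℝ) ^ m ≤ D'.card := by
    have hadd := Finset.card_filter_add_card_filter_not (s := D) (fun φ => Function.Injective φ)
    have hsub : (D.filter fun φ => ¬ Function.Injective φ).card
        ≤ ((Finset.univ : Finset (Fin m → Fin n)).filter
          (fun X => ¬ Function.Injective X)).card :=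
      Finset.card_le_card (Finset.filter_subset_filter _ (Finset.subset_univ _))
    have hadd' : (D'.card : ℝ) + ((D.filter fun φ => ¬ Function.Injective φ).card : ℝ) = D.card := by
      exact_mod_cast hadd
    have hsub' : ((D.filter fun φ => ¬ Function.Injective φ).card : ℝ)
        ≤ ((Finset.univ : Finset (Fin m → Fin n)).filter
          (fun X => ¬ Function.Injective X)).card := by exact_mod_cast hsub
    linarith
  obtain ⟨H, -, hH⟩ := Finset.exists_le_of_sum_le
    (s := (Finset.univ : Finset (Finset (Finset (Fin m)))))
    (f := fun _ => ε / 2 / K * (n : ℝ) ^ m)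
    (g := fun H => ((D'.filter fun φ => pullGraph r φ G = H).card : ℝ))
    Finset.univ_nonempty (by
      rw [Finset.sum_const, nsmul_eq_mul, Finset.card_univ, ← hK, ← Nat.cast_sum,
        ← Finset.card_eq_sum_card_fiberwise (fun _ _ => Finset.mem_univ _)]
      refine le_trans (le_of_eq ?_) hD'
      field_simp)
  have hpos : 0 < (D'.filter fun φ => pullGraph r φ G = H).card := by
    have : (0 : ℝ) < ((D'.filter fun φ => pullGraph r φ G = H).card : ℝ) :=
      lt_of_lt_of_le (by positivity) hH
    exact_mod_cast this
  obtain ⟨φ, hφ⟩ := Finset.card_pos.mp hpos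
  simp only [D', D, Finset.mem_filter, Finset.mem_univ, true_and] at hφ
  obtain ⟨⟨hφD, -⟩, rfl⟩ := hφ
  refine ⟨pullGraph r φ G, fun e he => (mem_pullGraph.mp he).1, hφD, hH.trans ?_⟩
  norm_cast
  refine Finset.card_le_card fun χ hχ => ?_
  simp only [D', D, Finset.mem_filter, Finset.mem_univ, true_and] at hχ ⊢
  exact ⟨hχ.1.2, hχ.2⟩

/-- For `𝓕` of density `x > 0`, a dense pullback recurring in infinitely many extremal graphs has
Lagrangian at most `x`, and at least about `x` because of its edge density. -/
lemma turanDensitySet_subset (r : ℕ) : turanDensitySet r ⊆ closure (lambdaSet r) := by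
  rintro x ⟨𝓕, -, hx⟩
  rcases le_or_gt x 0 with hx0 | hx0
  · have : x = 0 := le_antisymm hx0 (ge_of_tendsto' hx fun n => by positivity)
    rw [this]
    exact subset_closure (zero_mem_lambdaSet r)
  rw [Metric.mem_closure_iff]
  intro ε' hε'
  obtain ⟨ε, hε, hεε', hεx⟩ : ∃ ε : ℝ, 0 < ε ∧ ε ≤ ε' ∧ ε ≤ x :=
    ⟨min ε' x, lt_min hε' hx0, min_le_left _ _, min_le_right _ _⟩
  have hratio : Tendsto (fun n : ℕ => ((r.factorial : ℝ) * (n.choose r : ℝ)) / (n : ℝ) ^ r)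
      atTop (nhds 1) := by
    have := (tendsto_pow_div_choose r).inv₀ one_ne_zero
    simpa using this
  obtain ⟨m, hmε, hmr, hm⟩ : ∃ m : ℕ,
      x - ε < (x - ε / 2) * (((r.factorial : ℝ) * (m.choose r : ℝ)) / (m : ℝ) ^ r) ∧
        r ≤ m ∧ 0 < m := by
    have h := hratio.const_mul (x - ε / 2)
    rw [mul_one] at h
    exact ((h.eventually_const_lt (by linarith)).and
      ((eventually_ge_atTop r).and (eventually_gt_atTop 0))).exists
  obtain ⟨δ, hδ, hpull⟩ := eventually_exists_dense_pull hmr (a := x - ε / 2) (ε := ε / 4)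
    (by linarith) (by linarith)
  have hdens : Tendsto (fun n : ℕ => (r.factorial : ℝ) * exNum r n 𝓕 / (n : ℝ) ^ r)
      atTop (nhds x) := by
    have h := hx.mul hratio
    rw [mul_one] at h
    refine h.congr' ?_
    filter_upwards [eventually_ge_atTop r] with n hn
    have hc : (n.choose r : ℝ) ≠ 0 := by exact_mod_cast (Nat.choose_pos hn).ne'
    field_simp
  have hev : ∀ᶠ n : ℕ in atTop, ∃ H : Finset (Finset (Fin m)), ((∀ e ∈ H, e.card = r) ∧
      (x - ε / 2) * (m.choose r : ℝ) ≤ H.card) ∧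
      ∃ G : Finset (Finset (Fin n)), IsFree 𝓕 G ∧
        δ * (n : ℝ) ^ m ≤ (((Finset.univ : Finset (Fin m → Fin n)).filter
          (fun φ => Function.Injective φ ∧ pullGraph r φ G = H)).card : ℝ) := by
    filter_upwards [hpull, hdens.eventually_const_lt (show x - ε / 4 < x by linarith),
      eventually_gt_atTop 0] with n hn hnd hn0
    have hnpos : (0 : ℝ) < (n : ℝ) ^ r := by positivity
    rw [lt_div_iff₀ hnpos] at hnd
    have hex : 0 < exNum r n 𝓕 := by
      rcases Nat.eq_zero_or_pos (exNum r n 𝓕) with h0 | h0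
      · exfalso
        rw [h0] at hnd
        have : 0 < (x - ε / 4) * (n : ℝ) ^ r := mul_pos (by linarith) hnpos
        simp at hnd
        linarith
      · exact h0
    obtain ⟨G, hGr, hGfree, hGcard⟩ := exists_card_eq_exNum hex
    obtain ⟨H, hHr, hHcard, hHδ⟩ := hn G hGr (by
      rw [hGcard]
      refine le_trans (le_of_eq ?_) hnd.le
      ring)
    exact ⟨H, ⟨hHr, hHcard⟩, G, hGfree, hHδ⟩
  obtain ⟨H, hH⟩ := frequently_exists.mp hev.frequently
  obtain ⟨hHr, hHcard⟩ := hH.exists.choose_spec.1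
  have hupper : graphLagrangian r H ≤ x :=
    graphLagrangian_le_of_frequently hm hδ hx hHr (hH.mono fun _ h => h.2)
  have hlower : x - ε < graphLagrangian r H := by
    refine hmε.trans_le (le_trans ?_
      (card_le_graphLagrangian_of_hom hm hHr hHr id (fun e he => by simpa using he)))
    rw [← mul_div_assoc]
    refine div_le_div_of_nonneg_right ?_ (by positivity)
    calc (x - ε / 2) * ((r.factorial : ℝ) * (m.choose r : ℝ))
        = (r.factorial : ℝ) * ((x - ε / 2) * (m.choose r : ℝ)) := by ring
      _ ≤ (r.factorial : ℝ) * (H.card : ℝ) := by gcongr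
  refine ⟨graphLagrangian r H, ⟨m, H, hHr, rfl⟩, ?_⟩
  rw [Real.dist_eq, abs_of_nonneg (by linarith)]
  linarith

/-- Grosu: the closure of `Λ^{(r)}` equals `Π_∞^{(r)}`. -/
theorem closure_lambdaSet (r : ℕ) (hr : 2 ≤ r) :
    closure (lambdaSet r) = turanDensitySet r :=
  Set.Subset.antisymm (closure_lambdaSet_subset r) (turanDensitySet_subset r)
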